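/- Let (Ω, P) be a probability space and A a finite nonempty set. For each T ∈ ℕ let c_T be a real random variable, and for each α ∈ A let L_T(α) and r_T(α) be real random variables with L_T(α) > 0 almost surely; define the criterion C_T(α) = c_T + L_T(α) + r_T(α). Assume that for each α ∈ A the ratio r_T(α)/L_T(α) converges in probability to 0 as T → ∞. If α̂_T : Ω → A is measurable and satisfies C_T(α̂_T) = min over α ∈ A of C_T(α) almost surely, then L_T(α̂_T) / (min over α ∈ A of L_T(α)) converges in probability to 1 as T → ∞. -/

import Mathlib

/-! The criterion error is relatively small: off an event of vanishing probability,
`|r_T(α)| ≤ δ L_T(α)` holds for every `α` at once, because `A` is finite (union bound).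
There, with `α*` a minimizer of the loss, minimality of the criterion at `α̂` gives
`(1 - δ) L(α̂) ≤ L(α̂) + r(α̂) ≤ L(α*) + r(α*) ≤ (1 + δ) L(α*)`, so the loss ratio lies in
`[1, (1 + δ) / (1 - δ)]`, which is `[1, 1 + η]` for `δ = η / (2 + η)`. -/

open MeasureTheory Filter Finset

/-- `Z T → c` in probability: for every `η > 0`, `P(|Z_T − c| > η) → 0`. -/
def TendstoInProb {Ω : Type*} [MeasurableSpace Ω] (P : Measure Ω)
    (Z : ℕ → Ω → ℝ) (c : ℝ) : Prop :=
  ∀ η : ℝ, 0 < η →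
    Tendsto (fun T => P {ω | η < |Z T ω - c|}) atTop (nhds 0)

/-- Deterministic core: if every relative error `|r α / L α|` is at most `η / (2 + η)`, then the
loss at a minimizer `a` of `L + r` is within a factor `1 + η` of the minimal loss. -/
lemma abs_div_inf'_sub_one_le {A : Type*} [Fintype A] [Nonempty A] (L r : A → ℝ)
    (hL : ∀ α, 0 < L α) {η : ℝ} (hη : 0 < η)
    (hr : ∀ α, |r α / L α| ≤ η / (2 + η)) (a : A) (ha : ∀ α, L a + r a ≤ L α + r α) :
    |L a / Finset.univ.inf' Finset.univ_nonempty L - 1| ≤ η := by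
  obtain ⟨b, -, hb⟩ := Finset.exists_mem_eq_inf' Finset.univ_nonempty L
  have hba : L b ≤ L a := hb ▸ Finset.inf'_le L (Finset.mem_univ a)
  rw [hb]
  have key : ∀ α, (2 + η) * |r α| ≤ η * L α := fun α => by
    have h := hr α
    rw [abs_div, abs_of_pos (hL α), div_le_div_iff₀ (hL α) (by linarith)] at h
    linarith
  have hlow : 1 ≤ L a / L b := (one_le_div (hL b)).2 hba
  have hup : L a / L b ≤ 1 + η := by
    rw [div_le_iff₀ (hL b)]
    have h1 : (2 + η) * (-r a) ≤ (2 + η) * |r a| := by gcongr; exact neg_le_abs _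
    have h2 : (2 + η) * r b ≤ (2 + η) * |r b| := by gcongr; exact le_abs_self _
    have h3 : (2 + η) * (L a + r a) ≤ (2 + η) * (L b + r b) :=
      mul_le_mul_of_nonneg_left (ha b) (by linarith)
    linarith [key a, key b]
  rw [abs_le]
  constructor <;> linarith

/-- **Asymptotic optimality of criterion minimization.**
If the criterion `C_T(α) = c_T + L_T(α) + r_T(α)` with `L_T(α) > 0` a.s. and
`r_T(α)/L_T(α) → 0` in probability for each model `α` in the finite nonempty
set `A`, then the model `α̂_T` minimizing the criterion satisfies
`L_T(α̂_T) / min_α L_T(α) → 1` in probability. -/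
theorem criterion_selection_asymptotically_optimal
    {Ω : Type*} [MeasurableSpace Ω] (P : Measure Ω) [IsProbabilityMeasure P]
    {A : Type*} [Fintype A] [Nonempty A] [MeasurableSpace A]
    (c : ℕ → Ω → ℝ) (L r : ℕ → A → Ω → ℝ)
    (hLpos : ∀ T α, ∀ᵐ ω ∂P, 0 < L T α ω)
    (C : ℕ → A → Ω → ℝ)
    (hC : ∀ T α ω, C T α ω = c T ω + L T α ω + r T α ω)
    (hratio : ∀ α, TendstoInProb P (fun T ω => r T α ω / L T α ω) 0)
    (αhat : ℕ → Ω → A)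
    (hmeas : ∀ T, Measurable (αhat T))
    (hmin : ∀ T, ∀ᵐ ω ∂P, C T (αhat T ω) ω =
      Finset.univ.inf' Finset.univ_nonempty (fun α => C T α ω)) :
    TendstoInProb P (fun T ω =>
      L T (αhat T ω) ω /
        Finset.univ.inf' Finset.univ_nonempty (fun α => L T α ω)) 1 := by
  intro η hη
  have hδ : 0 < η / (2 + η) := by positivity
  have hsum : Tendsto (fun T => ∑ α, P {ω | η / (2 + η) < |r T α ω / L T α ω - 0|})
      atTop (nhds 0) := by
    simpa using tendsto_finsetSum Finset.univ fun α _ => hratio α _ hδ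
  refine tendsto_of_tendsto_of_tendsto_of_le_of_le tendsto_const_nhds hsum
    (fun _ => zero_le) fun T => ?_
  refine le_trans (measure_mono_ae ?_) (measure_iUnion_fintype_le P _)
  filter_upwards [ae_all_iff.2 (hLpos T), hmin T] with ω hL hm hbad
  by_contra hgood
  have hgood' : ∀ α, |r T α ω / L T α ω| ≤ η / (2 + η) := fun α => by
    by_contra h
    refine hgood (Set.mem_iUnion.2 ⟨α, ?_⟩)
    simpa using h
  refine absurd (abs_div_inf'_sub_one_le (fun α => L T α ω) (fun α => r T α ω) hL hη hgood'
    (αhat T ω) fun α => ?_) (not_le.2 hbad)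
  have h : C T (αhat T ω) ω ≤ C T α ω :=
    hm ▸ Finset.inf'_le (fun α => C T α ω) (Finset.mem_univ α)
  rw [hC, hC] at h
  linarith
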